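/- For every h = (h₁,h₂,h₃,h₄) ∈ ℝ⁴ satisfying (9/5)(h₁²+h₂²+h₃²) + (81/25)(h₄ − 4/9)² ≤ 1, one has 1 + 2h₂ − h₃ + 4h₄ ≥ 0, with equality if and only if h = (0, −2/5, 1/5, 0). (Thus the horoball of type s = −1/9 centered at the ideal vertex A₀ = (1,0,0,0,1) of the Coxeter simplex S̄₄ lies entirely in the closed half-space bounded by the opposite facet hyperplane u₀ = (1,0,2,−1,4), touching it only at the point F₀ = (1,0,−2/5,1/5,0); i.e. s = −1/9 is the maximal admissible horoball type.) -/

import Mathlib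

/-! The horoball is an ellipsoid `Q ≤ 1`, and `1 + 2h₂ - h₃ + 4h₄ = 0` is its tangent hyperplane
at `F₀ = (0, -2/5, 1/5, 0)`. Expanding `Q` exactly around `F₀` gives
`Q = 1 - (18/25) (1 + 2h₂ - h₃ + 4h₄) + P (h - F₀)` with `P` a positive definite diagonal quadratic
form, so on `Q ≤ 1` the linear form is bounded below by a positive multiple of `P (h - F₀)`,
which is nonnegative and vanishes only at `F₀`. -/

/-- The horoball of type `s = −1/9` centered at the ideal vertex `A₀ = (1,0,0,0,1)`
of the Coxeter simplex `S̄₄` lies in the closed half-space bounded by the opposite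
facet hyperplane `u₀ = (1,0,2,−1,4)`, touching it only at `F₀ = (1,0,−2/5,1/5,0)`. -/
theorem horoball_tangent_to_opposite_facet (h₁ h₂ h₃ h₄ : ℝ)
    (hball : (9/5) * (h₁^2 + h₂^2 + h₃^2) + (81/25) * (h₄ - 4/9)^2 ≤ 1) :
    0 ≤ 1 + 2*h₂ - h₃ + 4*h₄ ∧
    (1 + 2*h₂ - h₃ + 4*h₄ = 0 ↔ (h₁, h₂, h₃, h₄) = (0, -2/5, 1/5, 0)) := by
  -- Second-order Taylor expansion of the quadratic at the tangency point, where its gradient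
  -- is `-18/25` times the normal `(0, 2, -1, 4)` of the facet hyperplane.
  have key : (9/5) * (h₁^2 + (h₂ + 2/5)^2 + (h₃ - 1/5)^2) + (81/25) * h₄^2
      ≤ (18/25) * (1 + 2*h₂ - h₃ + 4*h₄) := by
    linarith
  have p₁ := sq_nonneg h₁
  have p₂ := sq_nonneg (h₂ + 2/5)
  have p₃ := sq_nonneg (h₃ - 1/5)
  have p₄ := sq_nonneg h₄
  refine ⟨by linarith, fun h => ?_, fun h => ?_⟩
  · have e₁ : h₁ = 0 := pow_eq_zero_iff two_ne_zero |>.mp (by linarith)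
    have e₂ : h₂ + 2/5 = 0 := pow_eq_zero_iff two_ne_zero |>.mp (by linarith)
    have e₃ : h₃ - 1/5 = 0 := pow_eq_zero_iff two_ne_zero |>.mp (by linarith)
    have e₄ : h₄ = 0 := pow_eq_zero_iff two_ne_zero |>.mp (by linarith)
    simp only [Prod.mk.injEq]
    exact ⟨e₁, by linarith, by linarith, e₄⟩
  · simp only [Prod.mk.injEq] at h
    obtain ⟨-, rfl, rfl, rfl⟩ := h
    norm_num
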